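/- Fix 0 < T < ∞, α ∈ (1,2], δ ∈ [0, (α−1)/2) and ε ∈ (0, (α−1)/2 − δ). Then there exists a constant C > 0 such that for every N ≥ 1, every t ∈ (0,T] and every v ∈ H^{α/2}_2(0,1), one has |(1 − P_N) e^{−A^{α/2} t} v|_{C^δ} ≤ C · N^{−((α−1)/2 − δ − ε)} · |v|_{H^{α/2}_2}. -/

import Mathlib

/-!
The proof is spectral. Write `λ_k = (k + 1)π` for the frequencies. The heat factor is at most `1`, the
eigenfunctions satisfy `|e_k| ≤ √2` and, by interpolating between `|sin a - sin b| ≤ 2` and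
`|sin a - sin b| ≤ |a - b|`, they satisfy `|e_k(x) - e_k(y)| ≤ 2√2 λ_k^δ |x - y|^δ`. Hence both parts of the
`C^δ` norm are bounded by a multiple of `∑_{k ≥ N} λ_k^δ |⟨v, e_k⟩|`.

With `r = (α - 1)/2 - δ - ε > 0` we have `λ_k^δ = λ_k^{-r} λ_k^{-1/2-ε} λ_k^{α/2}`, and `λ_k ≥ N` on the
tail, so the factor `λ_k^{-r}` yields `N^{-r}`. Cauchy–Schwarz applied to the remaining factors gives
`(∑ λ_k^{-1-2ε})^{1/2}`, a finite constant, times the `H^{α/2}` norm (`tail_bound`). All bounds are uniform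
in `t ≥ 0`, since only `e^{-λ_k^α t} ≤ 1` is used.
-/

open Real MeasureTheory Set

noncomputable section

/-- `sineEig k` is the eigenfunction `e_{k+1}(x) = √2 sin((k+1)πx)` (0-based indexing). -/
def sineEig (k : ℕ) (x : ℝ) : ℝ := Real.sqrt 2 * Real.sin (((k : ℝ) + 1) * Real.pi * x)

/-- Fourier sine coefficient `⟨v, e_{k+1}⟩ = ∫₀¹ v(x) e_{k+1}(x) dx`. -/
def fco (v : ℝ → ℝ) (k : ℕ) : ℝ := ∫ x in (0:ℝ)..1, v x * sineEig k x

/-- Fractional Dirichlet heat semigroup `e^{-A^{α/2} t} v`. -/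
def heatSG (α t : ℝ) (v : ℝ → ℝ) (x : ℝ) : ℝ :=
  ∑' k : ℕ, Real.exp (-(((k : ℝ) + 1) * Real.pi) ^ α * t) * fco v k * sineEig k x

/-- Spectral Sobolev `H^β₂(0,1)` norm. -/
def hNorm (β : ℝ) (v : ℝ → ℝ) : ℝ :=
  Real.sqrt (∑' k : ℕ, (((k : ℝ) + 1) * Real.pi) ^ (2 * β) * fco v k ^ 2)

/-- Membership in `H^β₂(0,1)` (finiteness of the spectral norm). -/
def memH (β : ℝ) (v : ℝ → ℝ) : Prop :=
  Summable fun k : ℕ => (((k : ℝ) + 1) * Real.pi) ^ (2 * β) * fco v k ^ 2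

/-- Supremum norm on `[0,1]`. -/
def supIcc (v : ℝ → ℝ) : ℝ := ⨆ x : Icc (0:ℝ) 1, |v (x : ℝ)|

/-- Hölder seminorm of exponent `δ` on `[0,1]`. -/
def holderSemi (δ : ℝ) (v : ℝ → ℝ) : ℝ :=
  ⨆ p : Icc (0:ℝ) 1 × Icc (0:ℝ) 1,
    |v (p.1 : ℝ) - v (p.2 : ℝ)| / |(p.1 : ℝ) - (p.2 : ℝ)| ^ δ

/-- The `C^δ(0,1)` norm: sup norm plus Hölder seminorm (just the sup norm when `δ = 0`). -/
def cNorm (δ : ℝ) (v : ℝ → ℝ) : ℝ :=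
  if δ = 0 then supIcc v else supIcc v + holderSemi δ v

/-- Membership in `C^δ(0,1)`: continuity plus finite Hölder seminorm. -/
def memC (δ : ℝ) (u : ℝ → ℝ) : Prop :=
  ContinuousOn u (Icc 0 1) ∧
    BddAbove (Set.range fun p : Icc (0:ℝ) 1 × Icc (0:ℝ) 1 =>
      |u (p.1 : ℝ) - u (p.2 : ℝ)| / |(p.1 : ℝ) - (p.2 : ℝ)| ^ δ)

/-- `L^p(0,1)` norm. -/
def lpNorm (p : ℝ) (v : ℝ → ℝ) : ℝ := (∫ x in (0:ℝ)..1, |v x| ^ p) ^ (1 / p)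

/-- Galerkin projection `P_N v` onto the first `N` modes. -/
def galerkin (N : ℕ) (v : ℝ → ℝ) (x : ℝ) : ℝ :=
  ∑ k ∈ Finset.range N, fco v k * sineEig k x

/-- Spectral `H^β₂` norm of `(1 - P_N) v`. -/
def tailHNorm (β : ℝ) (N : ℕ) (v : ℝ → ℝ) : ℝ :=
  Real.sqrt (∑' k : ℕ,
    if k < N then 0 else (((k : ℝ) + 1) * Real.pi) ^ (2 * β) * fco v k ^ 2)

/-- `(1 - P_N) e^{-A^{α/2} t} v`. -/
def tailSG (α t : ℝ) (N : ℕ) (v : ℝ → ℝ) (x : ℝ) : ℝ :=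
  ∑' k : ℕ, if k < N then 0
    else Real.exp (-(((k : ℝ) + 1) * Real.pi) ^ α * t) * fco v k * sineEig k x

/-- Cosine coefficient `∫₀¹ g(x) √2 cos((k+1)πx) dx`. -/
def cco (g : ℝ → ℝ) (k : ℕ) : ℝ :=
  ∫ x in (0:ℝ)..1, g x * (Real.sqrt 2 * Real.cos (((k : ℝ) + 1) * Real.pi * x))

/-- Spectral `H^{-α/2}₂` norm of the distributional derivative `∂ₓ g`. -/
def dxHNorm (α : ℝ) (g : ℝ → ℝ) : ℝ :=
  Real.sqrt (∑' k : ℕ, (((k : ℝ) + 1) * Real.pi) ^ (2 - α) * cco g k ^ 2)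

/-- The frequency `λ_k = (k + 1)π`, i.e. the square root of the Dirichlet eigenvalue of index `k`,
counted from `0`. -/
def freq (k : ℕ) : ℝ := ((k : ℝ) + 1) * Real.pi

lemma succ_le_freq (k : ℕ) : (k : ℝ) + 1 ≤ freq k := by
  have h : (0:ℝ) ≤ k := Nat.cast_nonneg k
  unfold freq
  nlinarith [Real.pi_gt_three]

lemma freq_pos (k : ℕ) : 0 < freq k := by
  unfold freq
  positivity

lemma one_le_freq (k : ℕ) : 1 ≤ freq k := by
  have h : (0:ℝ) ≤ k := Nat.cast_nonneg k
  linarith [succ_le_freq k]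

lemma summable_freq {p : ℝ} (hp : p < -1) : Summable fun k : ℕ => freq k ^ p := by
  have h := (summable_nat_add_iff 1).mpr (Real.summable_nat_rpow.mpr hp)
  refine h.of_nonneg_of_le (fun k => (Real.rpow_pos_of_pos (freq_pos k) p).le) fun k => ?_
  push_cast
  exact Real.rpow_le_rpow_of_nonpos (by positivity) (succ_le_freq k) (by linarith)

/-- The Cauchy–Schwarz constant `(∑ λ_k^{-1-2ε})^{1/2}`. -/
def tailConst (ε : ℝ) : ℝ := Real.sqrt (∑' k : ℕ, freq k ^ (-1 - 2 * ε))

lemma cauchySchwarz_freq {α ε : ℝ} (hε : 0 < ε) {v : ℝ → ℝ} (hv : memH (α / 2) v) :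
    (Summable fun k : ℕ => freq k ^ (-1 / 2 - ε) * (freq k ^ (α / 2) * |fco v k|)) ∧
      ∑' k : ℕ, freq k ^ (-1 / 2 - ε) * (freq k ^ (α / 2) * |fco v k|)
        ≤ tailConst ε * hNorm (α / 2) v := by
  have e1 : ∀ k : ℕ, (freq k ^ (-1 / 2 - ε)) ^ (2:ℝ) = freq k ^ (-1 - 2 * ε) := fun k => by
    rw [← Real.rpow_mul (freq_pos k).le]
    congr 1
    ring
  have e2 : ∀ k : ℕ, (freq k ^ (α / 2) * |fco v k|) ^ (2:ℝ)
      = (((k : ℝ) + 1) * Real.pi) ^ (2 * (α / 2)) * fco v k ^ 2 := fun k => by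
    rw [Real.mul_rpow (Real.rpow_pos_of_pos (freq_pos k) _).le (abs_nonneg _),
      ← Real.rpow_mul (freq_pos k).le, Real.rpow_two, sq_abs, mul_comm (α / 2)]
    rfl
  have h := Real.summable_and_inner_le_Lp_mul_Lq_tsum_of_nonneg Real.HolderConjugate.two_two
    (f := fun k : ℕ => freq k ^ (-1 / 2 - ε)) (g := fun k : ℕ => freq k ^ (α / 2) * |fco v k|)
    (fun k => (Real.rpow_pos_of_pos (freq_pos k) _).le)
    (fun k => mul_nonneg (Real.rpow_pos_of_pos (freq_pos k) _).le (abs_nonneg _))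
    (by simpa only [e1] using summable_freq (by linarith))
    (by simp only [e2]; exact hv)
  simp only [e1, e2] at h
  rwa [← Real.sqrt_eq_rpow, ← Real.sqrt_eq_rpow] at h

/-- A series supported on `k ≥ N` and dominated there by `B λ_k^δ |⟨v, e_k⟩|` converges, with sum
of order `N^{-r}` times the `H^{α/2}` norm of `v`. -/
lemma tail_bound {α δ ε : ℝ} (hε : 0 < ε) (hr : 0 ≤ (α - 1) / 2 - δ - ε) {v : ℝ → ℝ}
    (hv : memH (α / 2) v) {N : ℕ} (hN : 1 ≤ N) {B : ℝ} (hB : 0 ≤ B) {c : ℕ → ℝ}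
    (h0 : ∀ k < N, c k = 0) (hc : ∀ k, N ≤ k → |c k| ≤ B * (freq k ^ δ * |fco v k|)) :
    Summable c ∧
      |∑' k, c k| ≤ B * ((N : ℝ) ^ (-((α - 1) / 2 - δ - ε)) * (tailConst ε * hNorm (α / 2) v)) := by
  obtain ⟨hs, hle⟩ := cauchySchwarz_freq hε hv
  set r := (α - 1) / 2 - δ - ε with hr_def
  have hNpos : (0:ℝ) < N := by exact_mod_cast hN
  have hterm : ∀ k, ‖c k‖ ≤ B * ((N : ℝ) ^ (-r) *
      (freq k ^ (-1 / 2 - ε) * (freq k ^ (α / 2) * |fco v k|))) := fun k => by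
    have hf := freq_pos k
    rcases lt_or_ge k N with hk | hk
    · rw [h0 k hk, norm_zero]
      positivity
    · rw [Real.norm_eq_abs]
      refine (hc k hk).trans (mul_le_mul_of_nonneg_left ?_ hB)
      have hsplit : freq k ^ δ = freq k ^ (-r) * (freq k ^ (-1 / 2 - ε) * freq k ^ (α / 2)) := by
        rw [← Real.rpow_add hf, ← Real.rpow_add hf]
        congr 1
        rw [hr_def]
        ring
      have hkN : (N : ℝ) ≤ freq k := by
        have : (N : ℝ) ≤ k := by exact_mod_cast hk
        linarith [succ_le_freq k]
      have hpow : freq k ^ (-r) ≤ (N : ℝ) ^ (-r) :=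
        Real.rpow_le_rpow_of_nonpos hNpos hkN (by linarith)
      rw [hsplit, mul_assoc, mul_assoc]
      exact mul_le_mul_of_nonneg_right hpow (by positivity)
  have hsum := ((hs.mul_left ((N : ℝ) ^ (-r))).mul_left B)
  refine ⟨hsum.of_norm_bounded hterm, ?_⟩
  have h := tsum_of_norm_bounded hsum.hasSum hterm
  rw [tsum_mul_left, tsum_mul_left, Real.norm_eq_abs] at h
  refine h.trans (mul_le_mul_of_nonneg_left ?_ hB)
  exact mul_le_mul_of_nonneg_left hle (by positivity)

lemma abs_sin_sub_sin_le_rpow {δ : ℝ} (h0 : 0 ≤ δ) (h1 : δ ≤ 1) (a b : ℝ) :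
    |Real.sin a - Real.sin b| ≤ 2 * |a - b| ^ δ := by
  rcases le_total |a - b| 1 with h | h
  · have h2 := Real.self_le_rpow_of_le_one (abs_nonneg (a - b)) h h1
    linarith [Real.abs_sin_sub_sin_le a b, abs_nonneg (a - b)]
  · have h2 := Real.one_le_rpow h h0
    have h3 : |Real.sin a - Real.sin b| ≤ 2 := by
      rw [abs_le]
      constructor <;> linarith [Real.sin_le_one a, Real.sin_le_one b, Real.neg_one_le_sin a,
        Real.neg_one_le_sin b]
    linarith

lemma abs_sineEig_le (k : ℕ) (x : ℝ) : |sineEig k x| ≤ Real.sqrt 2 := by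
  unfold sineEig
  rw [abs_mul, abs_of_nonneg (Real.sqrt_nonneg 2)]
  exact mul_le_of_le_one_right (Real.sqrt_nonneg 2) (Real.abs_sin_le_one _)

lemma abs_sineEig_sub_le {δ : ℝ} (h0 : 0 ≤ δ) (h1 : δ ≤ 1) (k : ℕ) (x y : ℝ) :
    |sineEig k x - sineEig k y| ≤ Real.sqrt 2 * (2 * (freq k ^ δ * |x - y| ^ δ)) := by
  have h := abs_sin_sub_sin_le_rpow h0 h1 (freq k * x) (freq k * y)
  rw [← mul_sub, abs_mul, abs_of_pos (freq_pos k),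
    Real.mul_rpow (freq_pos k).le (abs_nonneg _)] at h
  have e : sineEig k x - sineEig k y
      = Real.sqrt 2 * (Real.sin (freq k * x) - Real.sin (freq k * y)) := by
    unfold sineEig freq
    ring
  rw [e, abs_mul, abs_of_nonneg (Real.sqrt_nonneg 2)]
  exact mul_le_mul_of_nonneg_left h (Real.sqrt_nonneg 2)

lemma abs_heat_mul_le (α : ℝ) {t : ℝ} (ht : 0 ≤ t) (k : ℕ) (f : ℝ) :
    |Real.exp (-(((k : ℝ) + 1) * Real.pi) ^ α * t) * f| ≤ |f| := by
  rw [abs_mul, Real.abs_exp]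
  refine mul_le_of_le_one_left (abs_nonneg f) (Real.exp_le_one_iff.mpr ?_)
  have h : 0 ≤ (((k : ℝ) + 1) * Real.pi) ^ α := by positivity
  nlinarith

/-- Pointwise bound and Hölder bound for the projected semigroup. -/
lemma tailSG_bounds {α δ ε t : ℝ} (hδ0 : 0 ≤ δ) (hδ1 : δ ≤ 1) (hε : 0 < ε)
    (hr : 0 ≤ (α - 1) / 2 - δ - ε) (ht : 0 ≤ t) {v : ℝ → ℝ} (hv : memH (α / 2) v) {N : ℕ}
    (hN : 1 ≤ N) (x y : ℝ) :
    |tailSG α t N v x| ≤ Real.sqrt 2 *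
        ((N : ℝ) ^ (-((α - 1) / 2 - δ - ε)) * (tailConst ε * hNorm (α / 2) v)) ∧
      |tailSG α t N v x - tailSG α t N v y| ≤ Real.sqrt 2 * 2 * |x - y| ^ δ *
        ((N : ℝ) ^ (-((α - 1) / 2 - δ - ε)) * (tailConst ε * hNorm (α / 2) v)) := by
  have hpt : ∀ z k, N ≤ k → |if k < N then (0:ℝ) else
      Real.exp (-(((k : ℝ) + 1) * Real.pi) ^ α * t) * fco v k * sineEig k z|
        ≤ Real.sqrt 2 * (freq k ^ δ * |fco v k|) := fun z k hk => by
    rw [if_neg (not_lt.mpr hk), abs_mul]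
    have h1 := Real.one_le_rpow (one_le_freq k) hδ0
    calc _ ≤ |fco v k| * Real.sqrt 2 :=
          mul_le_mul (abs_heat_mul_le α ht k _) (abs_sineEig_le k z) (abs_nonneg _) (abs_nonneg _)
      _ ≤ Real.sqrt 2 * (freq k ^ δ * |fco v k|) := by
          rw [mul_comm]
          exact mul_le_mul_of_nonneg_left (le_mul_of_one_le_left (abs_nonneg _) h1)
            (Real.sqrt_nonneg 2)
  have hS := fun z => tail_bound hε hr hv hN (Real.sqrt_nonneg 2)
    (fun k hk => if_pos hk) (hpt z)
  refine ⟨(hS x).2, ?_⟩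
  unfold tailSG
  rw [← (hS x).1.tsum_sub (hS y).1]
  refine (tail_bound hε hr hv hN (by positivity) (fun k hk => ?_) fun k hk => ?_).2
  · simp only [if_pos hk, sub_zero]
  · rw [if_neg (not_lt.mpr hk), if_neg (not_lt.mpr hk), ← mul_sub, abs_mul]
    refine (mul_le_mul (abs_heat_mul_le α ht k _) (abs_sineEig_sub_le hδ0 hδ1 k x y)
      (abs_nonneg _) (abs_nonneg _)).trans (le_of_eq ?_)
    ring

/-- rate of convergence of `(1 - P_N) e^{-A^{α/2}t}` from `H^{α/2}₂` to `C^δ`. -/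
theorem stmt12 (T α δ ε : ℝ) (hT : 0 < T) (hα : α ∈ Set.Ioc (1:ℝ) 2)
    (hδ : δ ∈ Set.Ico (0:ℝ) ((α - 1)/2)) (hε : ε ∈ Set.Ioo (0:ℝ) ((α - 1)/2 - δ)) :
    ∃ C > 0, ∀ N : ℕ, 1 ≤ N → ∀ t ∈ Set.Ioc (0:ℝ) T, ∀ v : ℝ → ℝ, memH (α/2) v →
      cNorm δ (tailSG α t N v)
        ≤ C * (N : ℝ) ^ (-((α - 1)/2 - δ - ε)) * hNorm (α/2) v := by
  obtain ⟨hα1, hα2⟩ := hα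
  obtain ⟨hδ0, hδ1⟩ := hδ
  obtain ⟨hε0, hε1⟩ := hε
  have hK : 0 ≤ tailConst ε := Real.sqrt_nonneg _
  -- `√2` comes from the sup norm and `2√2` from the seminorm; the `+ 1` gives `C > 0` at once.
  refine ⟨3 * Real.sqrt 2 * (tailConst ε + 1), by positivity, fun N hN t ht v hv => ?_⟩
  have hb := tailSG_bounds (α := α) (δ := δ) (ε := ε) hδ0 (by linarith) hε0 (by linarith)
    ht.1.le hv hN
  set P := (N : ℝ) ^ (-((α - 1) / 2 - δ - ε))
  have hP : 0 ≤ P := by positivity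
  have hH : 0 ≤ hNorm (α / 2) v := Real.sqrt_nonneg _
  have hnn : (0:ℝ) ∈ Icc (0:ℝ) 1 := ⟨le_rfl, zero_le_one⟩
  have : Nonempty (Icc (0:ℝ) 1) := ⟨⟨0, hnn⟩⟩
  have hsup : supIcc (tailSG α t N v) ≤ Real.sqrt 2 * (P * (tailConst ε * hNorm (α / 2) v)) :=
    ciSup_le fun x => (hb x x).1
  have hsemi : holderSemi δ (tailSG α t N v)
      ≤ Real.sqrt 2 * 2 * (P * (tailConst ε * hNorm (α / 2) v)) := by
    -- On the diagonal the quotient is `0 / 0 ^ δ = 0`, which `div_le_of_le_mul₀` also covers.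
    refine ciSup_le fun p => div_le_of_le_mul₀ (by positivity) (by positivity) ?_
    exact (hb p.1 p.2).2.trans (le_of_eq (by ring))
  have hPH : 0 ≤ Real.sqrt 2 * (P * hNorm (α / 2) v) := by positivity
  have hPKH : 0 ≤ Real.sqrt 2 * (P * (tailConst ε * hNorm (α / 2) v)) := by positivity
  unfold cNorm
  split_ifs <;> nlinarith
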